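/- Let p be a prime and let u, v be positive integers with w = gcd(u, v). Let a_0, …, a_{v−1} and b_0, …, b_{u−1} be integers in {0, …, p−1}, and define J = Σ_{k=0}^{u/w−1} Σ_{r=0}^{v−1} a_r · p^{vk+r} and I = Σ_{k=0}^{v/w−1} Σ_{s=0}^{u−1} b_s · p^{uk+s}. Then the binomial coefficient C(J, I) is not divisible by p if and only if for every s ∈ {0, …, u−1}, writing t ∈ {0, …, w−1} for the residue of s modulo w, one has b_s ≤ min{ a_{θw+t} : θ ∈ {0, …, v/w − 1} }. -/

import Mathlib

/-!
Up to the length `lcm u v = v * (u / w) = u * (v / w)`, the base-`p` digits of `J` and `I` repeat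
those of `a` and `b` with periods `v` and `u`. By Lucas's theorem, `p ∤ C(J, I)` means that
`b (i % u) ≤ a (i % v)` for every `i < lcm u v`, and by the Chinese remainder theorem the pairs
`(i % u, i % v)` are exactly the pairs of residues that agree modulo `w`.
-/

open Finset

theorem sum_range_mul_eq_sum_sum {M : Type*} [AddCommMonoid M] (f : ℕ → M) (m n : ℕ) :
    ∑ i ∈ range (m * n), f i = ∑ k ∈ range n, ∑ r ∈ range m, f (m * k + r) := by
  induction n with
  | zero => simp
  | succ n ih => rw [Nat.mul_succ, sum_range_add, ih, sum_range_succ]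

theorem sum_sum_mul_pow_eq_sum_mod {R : Type*} [Semiring R] (x : R) (c : ℕ → R) (m n : ℕ) :
    ∑ k ∈ range n, ∑ r ∈ range m, c r * x ^ (m * k + r) =
      ∑ i ∈ range (m * n), c (i % m) * x ^ i := by
  rw [sum_range_mul_eq_sum_sum]
  refine sum_congr rfl fun k _ ↦ sum_congr rfl fun r hr ↦ ?_
  rw [Nat.mul_add_mod, Nat.mod_eq_of_lt (mem_range.mp hr)]

section Digits

variable {b n : ℕ} {c : ℕ → ℕ}

theorem coe_finFunctionFinEquiv_eq_sum_range (hc : ∀ i < n, c i < b) :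
    (finFunctionFinEquiv (fun i : Fin n ↦ (⟨c i, hc i i.isLt⟩ : Fin b)) : ℕ) =
      ∑ i ∈ range n, c i * b ^ i := by
  rw [finFunctionFinEquiv_apply, sum_range]

theorem sum_range_mul_pow_lt_pow (hc : ∀ i < n, c i < b) :
    ∑ i ∈ range n, c i * b ^ i < b ^ n :=
  coe_finFunctionFinEquiv_eq_sum_range hc ▸ Fin.isLt _

theorem sum_range_mul_pow_div_pow_mod (hc : ∀ i < n, c i < b) {j : ℕ} (hj : j < n) :
    (∑ i ∈ range n, c i * b ^ i) / b ^ j % b = c j := by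
  rw [← coe_finFunctionFinEquiv_eq_sum_range hc]
  exact congrArg Fin.val (congrFun (finFunctionFinEquiv.symm_apply_apply _) (⟨j, hj⟩ : Fin n))

end Digits

section Lucas

variable {p : ℕ}

theorem not_dvd_choose_iff_le_of_lt (hp : p.Prime) {n k : ℕ} (hn : n < p) :
    ¬ p ∣ n.choose k ↔ k ≤ n := by
  refine ⟨fun h ↦ ?_, fun hk ↦ hp.coprime_iff_not_dvd.mp (hp.coprime_choose_of_lt hn hk)⟩
  by_contra! hk
  exact h (Nat.choose_eq_zero_of_lt hk ▸ dvd_zero p)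

theorem not_dvd_choose_iff_forall_digit_le (hp : p.Prime) {n k l : ℕ} (hk : k < p ^ l) :
    ¬ p ∣ n.choose k ↔ ∀ i < l, k / p ^ i % p ≤ n / p ^ i % p := by
  have : Fact p.Prime := ⟨hp⟩
  have lucas : n.choose k ≡ ∏ i ∈ range l, (n / p ^ i % p).choose (k / p ^ i % p) [MOD p] := by
    rw [← Int.natCast_modEq_iff]
    simpa [Nat.div_eq_of_lt hk] using
      Choose.choose_modEq_choose_mul_prod_range_choose (n := n) (k := k) (p := p) l
  simp only [lucas.dvd_iff dvd_rfl, hp.prime.dvd_finsetProd_iff, mem_range, not_exists, not_and,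
    not_dvd_choose_iff_le_of_lt hp (Nat.mod_lt _ hp.pos)]

theorem not_dvd_choose_sum_mul_pow_iff (hp : p.Prime) {l : ℕ} {c d : ℕ → ℕ}
    (hc : ∀ i < l, c i < p) (hd : ∀ i < l, d i < p) :
    ¬ p ∣ (∑ i ∈ range l, c i * p ^ i).choose (∑ i ∈ range l, d i * p ^ i) ↔
      ∀ i < l, d i ≤ c i := by
  rw [not_dvd_choose_iff_forall_digit_le hp (sum_range_mul_pow_lt_pow hd)]
  refine forall₂_congr fun i hi ↦ ?_
  rw [sum_range_mul_pow_div_pow_mod hc hi, sum_range_mul_pow_div_pow_mod hd hi]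

end Lucas

theorem forall_lt_lcm_mod_mod_iff {u v : ℕ} {P : ℕ → ℕ → Prop} :
    (∀ i < u.lcm v, P (i % u) (i % v)) ↔
      ∀ s < u, ∀ r < v, s ≡ r [MOD u.gcd v] → P s r := by
  constructor
  · intro h s hs r hr hsr
    obtain ⟨hu, hv⟩ := (Nat.chineseRemainder' hsr).2
    have hP := h _ (Nat.chineseRemainder'_lt_lcm hsr (by lia) (by lia))
    rwa [Nat.mod_eq_of_modEq hu hs, Nat.mod_eq_of_modEq hv hr] at hP
  · intro h i hi
    obtain ⟨hu, hv⟩ : 0 < u ∧ 0 < v := Nat.lcm_pos_iff.mp (Nat.zero_lt_of_lt hi)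
    refine h _ (Nat.mod_lt _ hu) _ (Nat.mod_lt _ hv) ?_
    exact ((Nat.mod_modEq i u).of_dvd (Nat.gcd_dvd_left u v)).trans
      ((Nat.mod_modEq i v).of_dvd (Nat.gcd_dvd_right u v)).symm

theorem forall_lt_modEq_iff {w v : ℕ} (hwv : w ∣ v) {s : ℕ} {P : ℕ → Prop} :
    (∀ r < v, s ≡ r [MOD w] → P r) ↔ ∀ θ < v / w, P (θ * w + s % w) := by
  constructor
  · intro h θ hθ
    have hw : 0 < w := Nat.pos_of_ne_zero (by rintro rfl; simp at hθ)
    refine h _ ?_ (by simp [Nat.ModEq])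
    calc θ * w + s % w < θ * w + w := Nat.add_lt_add_left (Nat.mod_lt s hw) _
      _ = (θ + 1) * w := (Nat.succ_mul θ w).symm
      _ ≤ v / w * w := Nat.mul_le_mul_right w hθ
      _ = v := Nat.div_mul_cancel hwv
  · intro h r hr hsr
    have hP := h (r / w) (Nat.div_lt_div_of_lt_of_dvd hwv hr)
    rwa [hsr, Nat.div_add_mod'] at hP

/-- Lemma 4.4 (Lemma `13102022-1`): Lucas-type criterion for the non-vanishing mod `p`
of the binomial coefficient `C(J, I)` where `J` and `I` have the indicated base-`p`
expansions. -/
theorem stmt_0 (p u v : ℕ) (hp : p.Prime) (hu : 0 < u) (hv : 0 < v)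
    (w : ℕ) (hw : w = Nat.gcd u v)
    (a b : ℕ → ℕ)
    (ha : ∀ r < v, a r ≤ p - 1) (hb : ∀ s < u, b s ≤ p - 1)
    (J I : ℕ)
    (hJ : J = ∑ k ∈ Finset.range (u / w), ∑ r ∈ Finset.range v, a r * p ^ (v * k + r))
    (hI : I = ∑ k ∈ Finset.range (v / w), ∑ s ∈ Finset.range u, b s * p ^ (u * k + s)) :
    ¬ p ∣ Nat.choose J I ↔ ∀ s < u, ∀ θ < v / w, b s ≤ a (θ * w + s % w) := by
  subst hw
  have hwv : u.gcd v ∣ v := Nat.gcd_dvd_right u v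
  have hJ_length : v * (u / u.gcd v) = u.lcm v := by
    rw [← Nat.mul_div_assoc _ (Nat.gcd_dvd_left u v), mul_comm, Nat.lcm]
  have hI_length : u * (v / u.gcd v) = u.lcm v := (Nat.mul_div_assoc u hwv).symm
  have ha_lt (i : ℕ) : a (i % v) < p := Nat.lt_of_le_pred hp.pos (ha _ (Nat.mod_lt i hv))
  have hb_lt (i : ℕ) : b (i % u) < p := Nat.lt_of_le_pred hp.pos (hb _ (Nat.mod_lt i hu))
  rw [sum_sum_mul_pow_eq_sum_mod p a, hJ_length] at hJ
  rw [sum_sum_mul_pow_eq_sum_mod p b, hI_length] at hI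
  calc ¬ p ∣ J.choose I
    _ ↔ ∀ i < u.lcm v, b (i % u) ≤ a (i % v) := by
      rw [hJ, hI, not_dvd_choose_sum_mul_pow_iff hp (fun i _ ↦ ha_lt i) (fun i _ ↦ hb_lt i)]
    _ ↔ ∀ s < u, ∀ r < v, s ≡ r [MOD u.gcd v] → b s ≤ a r :=
      forall_lt_lcm_mod_mod_iff (P := fun s r ↦ b s ≤ a r)
    _ ↔ ∀ s < u, ∀ θ < v / u.gcd v, b s ≤ a (θ * u.gcd v + s % u.gcd v) :=
      forall₂_congr fun s _ ↦ forall_lt_modEq_iff hwv (P := fun r ↦ b s ≤ a r)
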